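/- Let f : [0,∞) → ℝ be differentiable with f' Lebesgue integrable on [a,b], where 0 < a < b < ∞. Let m ∈ (0,1] and q > 1. If |f'|^q is (1,m)-GA-convex on [0, max{a^{1/m}, b}], then |(b²·f(b) − a²·f(a))/2 − ∫_a^b x·f(x) dx| ≤ ((ln b − ln a)^{1−1/q}/2) · (1/(3q))^{1/q} · { m·[L(a^{3q}, b^{3q}) − a^{3q}]·|f'(a^{1/m})|^q + [b^{3q} − L(a^{3q}, b^{3q})]·|f'(b)|^q }^{1/q}. -/

import Mathlib

open Real MeasureTheory Set

/-- The logarithmic mean `L(x,y) = (y - x)/(ln y - ln x)`. -/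
noncomputable def L (x y : ℝ) : ℝ := (y - x) / (Real.log y - Real.log x)

/-- `G(α,ℓ) = ∫_0^1 t^α a^{ℓ(1-t)} b^{ℓ t} dt` (for parameters `a, b`). -/
noncomputable def G (a b α ℓ : ℝ) : ℝ :=
  ∫ t in (0:ℝ)..1, t ^ α * a ^ (ℓ * (1 - t)) * b ^ (ℓ * t)

/-- A function `h` is `(α,m)`-GA-convex on `[0,c]` if
`h(x^λ y^{m(1-λ)}) ≤ λ^α h(x) + m(1-λ^α) h(y)` for all `x, y ∈ [0,c]`, `λ ∈ [0,1]`. -/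
def GAConvexOn (α m c : ℝ) (h : ℝ → ℝ) : Prop :=
  ∀ x ∈ Icc (0:ℝ) c, ∀ y ∈ Icc (0:ℝ) c, ∀ l ∈ Icc (0:ℝ) 1,
    h (x ^ l * y ^ (m * (1 - l))) ≤ l ^ α * h x + m * (1 - l ^ α) * h y

/-- A function `h` is `(α,m)`-GA-concave on `[0,c]` if
`h(x^λ y^{m(1-λ)}) ≥ λ^α h(x) + m(1-λ^α) h(y)` for all `x, y ∈ [0,c]`, `λ ∈ [0,1]`. -/
def GAConcaveOn (α m c : ℝ) (h : ℝ → ℝ) : Prop :=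
  ∀ x ∈ Icc (0:ℝ) c, ∀ y ∈ Icc (0:ℝ) c, ∀ l ∈ Icc (0:ℝ) 1,
    l ^ α * h x + m * (1 - l ^ α) * h y ≤ h (x ^ l * y ^ (m * (1 - l)))

/-!
Integrating by parts with `x ^ s`, where `s = 2` in `stmt_9`, turns the left-hand side into
`(∫ x ^ s * f' x) / s`. Written as `x ^ s dx = x ^ (s + 1) dx / x`, the integral is taken against
`dx / x`, whose mass on `[a, b]` is `log b - log a`; the power mean inequality for this measure
bounds it through `∫ x ^ ((s + 1) * q - 1) * |f' x| ^ q`. Each `x ∈ [a, b]` is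
`b ^ l * (a ^ (1 / m)) ^ (m * (1 - l))` with `l` affine in `log x`, so GA-convexity dominates
`|f' x| ^ q` by an affine function of `log x` with endpoint values `m * |f' (a ^ (1 / m))| ^ q` and
`|f' b| ^ q`; integrating it against a power of `x` produces the logarithmic mean.
-/

section PositiveInterval

variable {a b s : ℝ}

theorem ne_zero_of_mem_uIcc (ha : 0 < a) (hb : 0 < b) {x : ℝ} (hx : x ∈ uIcc a b) : x ≠ 0 :=
  ne_of_mem_of_not_mem hx (notMem_uIcc_of_lt ha hb)

theorem continuousOn_rpow_uIcc (ha : 0 < a) (hb : 0 < b) (s : ℝ) :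
    ContinuousOn (fun x : ℝ => x ^ s) (uIcc a b) :=
  continuousOn_id.rpow_const fun _ hx => .inl (ne_zero_of_mem_uIcc ha hb hx)

theorem integral_rpow_sub_one (ha : 0 < a) (hb : 0 < b) (hs : s ≠ 0) :
    ∫ x in a..b, x ^ (s - 1) = (b ^ s - a ^ s) / s := by
  have h := integral_rpow (a := a) (b := b) (r := s - 1)
    (.inr ⟨by simpa using hs, notMem_uIcc_of_lt ha hb⟩)
  simpa only [sub_add_cancel] using h

theorem integral_rpow_mul_deriv_eq {f f' : ℝ → ℝ} (ha : 0 < a) (hb : 0 < b)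
    (hderiv : ∀ x ∈ uIcc a b, HasDerivWithinAt f (f' x) (uIcc a b) x)
    (hint : IntervalIntegrable f' volume a b) :
    ∫ x in a..b, x ^ s * f' x =
      b ^ s * f b - a ^ s * f a - s * ∫ x in a..b, x ^ (s - 1) * f x := by
  have hpow : ∀ x ∈ uIcc a b,
      HasDerivWithinAt (fun x : ℝ => x ^ s) (s * x ^ (s - 1)) (uIcc a b) x := fun x hx =>
    (hasDerivAt_rpow_const (.inl (ne_zero_of_mem_uIcc ha hb hx))).hasDerivWithinAt
  rw [intervalIntegral.integral_mul_deriv_eq_deriv_mul_of_hasDerivWithinAt hpow hderiv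
    ((continuousOn_rpow_uIcc ha hb (s - 1)).intervalIntegrable.const_mul s) hint]
  simp only [mul_assoc, intervalIntegral.integral_const_mul]

end PositiveInterval

/-- The position of `x` between `a` and `b` on the logarithmic scale: the exponent `l` for which
`x = b ^ l * a ^ (1 - l)`. -/
noncomputable def logCoord (a b x : ℝ) : ℝ := (log x - log a) / (log b - log a)

section LogCoord

variable {a b s x : ℝ}

theorem logCoord_mem_Icc (ha : 0 < a) (hx : x ∈ Icc a b) : logCoord a b x ∈ Icc (0 : ℝ) 1 := by
  have hax : log a ≤ log x := log_le_log ha hx.1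
  have hxb : log x ≤ log b := log_le_log (ha.trans_le hx.1) hx.2
  exact ⟨div_nonneg (by linarith) (by linarith), div_le_one_of_le₀ (by linarith) (by linarith)⟩

theorem rpow_logCoord_mul_rpow_one_sub (ha : 0 < a) (hb : 0 < b) (hab : a ≠ b) (hx : 0 < x) :
    b ^ logCoord a b x * a ^ (1 - logCoord a b x) = x := by
  have hlog : log b - log a ≠ 0 := sub_ne_zero.2 (log_injOn_pos.ne hb ha hab.symm)
  have hexp : log b * logCoord a b x + log a * (1 - logCoord a b x) = log x := by
    rw [logCoord]; field_simp; ring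
  rw [rpow_def_of_pos hb, rpow_def_of_pos ha, ← exp_add, hexp, exp_log hx]

theorem hasDerivAt_logCoord (hx : x ≠ 0) :
    HasDerivAt (logCoord a b) (x⁻¹ / (log b - log a)) x :=
  ((hasDerivAt_log hx).sub_const _).div_const _

theorem continuousOn_logCoord (ha : 0 < a) (hb : 0 < b) :
    ContinuousOn (logCoord a b) (uIcc a b) := fun _ hx =>
  (hasDerivAt_logCoord (ne_zero_of_mem_uIcc ha hb hx)).continuousAt.continuousWithinAt

theorem integral_rpow_mul_logCoord (ha : 0 < a) (hb : 0 < b) (hab : a ≠ b) (hs : s ≠ 0) :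
    ∫ x in a..b, x ^ (s - 1) * logCoord a b x = (b ^ s - L (a ^ s) (b ^ s)) / s := by
  have hlog : log b - log a ≠ 0 := sub_ne_zero.2 (log_injOn_pos.ne hb ha hab.symm)
  have hne : ∀ x ∈ uIcc a b, x ≠ 0 := fun x hx => ne_zero_of_mem_uIcc ha hb hx
  have hcoord_right : logCoord a b b = 1 := div_self hlog
  have hcoord_left : logCoord a b a = 0 := by simp [logCoord]
  calc ∫ x in a..b, x ^ (s - 1) * logCoord a b x
      = ∫ x in a..b, logCoord a b x * x ^ (s - 1) := by simp only [mul_comm]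
    _ = logCoord a b b * (b ^ s / s) - logCoord a b a * (a ^ s / s)
          - ∫ x in a..b, x⁻¹ / (log b - log a) * (x ^ s / s) := by
        refine intervalIntegral.integral_mul_deriv_eq_deriv_mul (v := fun x => x ^ s / s)
          (fun x hx => hasDerivAt_logCoord (hne x hx)) (fun x hx => ?_) ?_
          (continuousOn_rpow_uIcc ha hb (s - 1)).intervalIntegrable
        · simpa [hs] using (hasDerivAt_rpow_const (p := s) (.inl (hne x hx))).div_const s
        · exact (ContinuousOn.inv₀ continuousOn_id hne).div_const _ |>.intervalIntegrable
    _ = b ^ s / s - ∫ x in a..b, 1 / (s * (log b - log a)) * x ^ (s - 1) := by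
        rw [hcoord_right, hcoord_left, one_mul, zero_mul, sub_zero]
        congr 1
        refine intervalIntegral.integral_congr fun x hx => ?_
        simp only [rpow_sub_one (hne x hx)]
        field_simp
    _ = (b ^ s - L (a ^ s) (b ^ s)) / s := by
        rw [intervalIntegral.integral_const_mul, integral_rpow_sub_one ha hb hs, L, log_rpow ha,
          log_rpow hb, ← mul_sub]
        field_simp

theorem integral_rpow_mul_one_sub_logCoord (ha : 0 < a) (hb : 0 < b) (hab : a ≠ b) (hs : s ≠ 0) :
    ∫ x in a..b, x ^ (s - 1) * (1 - logCoord a b x) = (L (a ^ s) (b ^ s) - a ^ s) / s := by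
  have hcont : ContinuousOn (logCoord a b) (uIcc a b) :=
    continuousOn_logCoord ha hb
  have hpow : IntervalIntegrable (fun x : ℝ => x ^ (s - 1)) volume a b :=
    (continuousOn_rpow_uIcc ha hb (s - 1)).intervalIntegrable
  simp only [mul_sub, mul_one]
  rw [intervalIntegral.integral_sub hpow (hpow.mul_continuousOn hcont),
    integral_rpow_sub_one ha hb hs, integral_rpow_mul_logCoord ha hb hab hs]
  ring

end LogCoord

namespace GAConvexOn

variable {α a b c m s : ℝ} {h : ℝ → ℝ}

theorem le_logCoord (hh : GAConvexOn α m c h) (ha : 0 < a) (hab : a < b) (hm : m ≠ 0)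
    (hac : a ^ (1 / m) ≤ c) (hbc : b ≤ c) {x : ℝ} (hx : x ∈ Icc a b) :
    h x ≤ logCoord a b x ^ α * h b + m * (1 - logCoord a b x ^ α) * h (a ^ (1 / m)) := by
  have hb : 0 < b := ha.trans hab
  have hexp : (a ^ (1 / m)) ^ (m * (1 - logCoord a b x)) = a ^ (1 - logCoord a b x) := by
    rw [← rpow_mul ha.le]; congr 1; field_simp
  have := hh b ⟨hb.le, hbc⟩ (a ^ (1 / m)) ⟨by positivity, hac⟩ _ (logCoord_mem_Icc ha hx)
  rwa [hexp, rpow_logCoord_mul_rpow_one_sub ha hb hab.ne (ha.trans_le hx.1)] at this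

theorem intervalIntegrable_of_nonneg (hh : GAConvexOn 1 m c h) (ha : 0 < a) (hab : a < b)
    (hm : m ≠ 0) (hac : a ^ (1 / m) ≤ c) (hbc : b ≤ c)
    (hmeas : AEStronglyMeasurable h (volume.restrict (Ioc a b))) (h0 : ∀ x ∈ Ioc a b, 0 ≤ h x) :
    IntervalIntegrable h volume a b := by
  have hcont : ContinuousOn (logCoord a b) (uIcc a b) :=
    continuousOn_logCoord ha (ha.trans hab)
  have hbound : IntervalIntegrable (fun x => logCoord a b x * h b
      + m * (1 - logCoord a b x) * h (a ^ (1 / m))) volume a b :=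
    ContinuousOn.intervalIntegrable (by fun_prop)
  rw [← uIoc_of_le hab.le] at hmeas h0
  refine hbound.mono_fun' hmeas (ae_restrict_of_forall_mem measurableSet_uIoc fun x hx => ?_)
  have hx' : x ∈ Icc a b := Ioc_subset_Icc_self (uIoc_of_le hab.le ▸ hx)
  simpa only [norm_of_nonneg (h0 x hx), rpow_one] using hh.le_logCoord ha hab hm hac hbc hx'

theorem integral_rpow_mul_le (hh : GAConvexOn 1 m c h) (ha : 0 < a) (hab : a < b) (hm : m ≠ 0)
    (hs : s ≠ 0) (hac : a ^ (1 / m) ≤ c) (hbc : b ≤ c) (hint : IntervalIntegrable h volume a b) :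
    ∫ x in a..b, x ^ (s - 1) * h x ≤
      1 / s * (m * (L (a ^ s) (b ^ s) - a ^ s) * h (a ^ (1 / m))
        + (b ^ s - L (a ^ s) (b ^ s)) * h b) := by
  have hb : 0 < b := ha.trans hab
  have hpow : ContinuousOn (fun x : ℝ => x ^ (s - 1)) (uIcc a b) :=
    continuousOn_rpow_uIcc ha hb (s - 1)
  have hcoord : ContinuousOn (logCoord a b) (uIcc a b) :=
    continuousOn_logCoord ha hb
  have hright : IntervalIntegrable (fun x => x ^ (s - 1) * logCoord a b x * h b) volume a b :=
    ContinuousOn.intervalIntegrable (by fun_prop)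
  have hleft : IntervalIntegrable
      (fun x => x ^ (s - 1) * (1 - logCoord a b x) * (m * h (a ^ (1 / m)))) volume a b :=
    ContinuousOn.intervalIntegrable (by fun_prop)
  calc ∫ x in a..b, x ^ (s - 1) * h x
      ≤ ∫ x in a..b, (x ^ (s - 1) * logCoord a b x * h b
          + x ^ (s - 1) * (1 - logCoord a b x) * (m * h (a ^ (1 / m)))) := by
        refine intervalIntegral.integral_mono_on hab.le (hint.continuousOn_mul hpow)
          (hright.add hleft) fun x hx => ?_
        have hle := hh.le_logCoord ha hab hm hac hbc hx
        have hx0 : 0 ≤ x ^ (s - 1) := rpow_nonneg (ha.le.trans hx.1) _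
        rw [rpow_one] at hle
        exact (mul_le_mul_of_nonneg_left hle hx0).trans_eq (by ring)
    _ = (b ^ s - L (a ^ s) (b ^ s)) / s * h b
          + (L (a ^ s) (b ^ s) - a ^ s) / s * (m * h (a ^ (1 / m))) := by
        rw [intervalIntegral.integral_add hright hleft, intervalIntegral.integral_mul_const,
          intervalIntegral.integral_mul_const, integral_rpow_mul_logCoord ha hb hab.ne hs,
          integral_rpow_mul_one_sub_logCoord ha hb hab.ne hs]
    _ = _ := by ring

end GAConvexOn

section PowerMean

variable {X : Type*} [MeasurableSpace X] {μ : Measure X}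

theorem memLp_ofReal_of_integrable_rpow {p : ℝ} {f : X → ℝ} (hp : 0 < p)
    (hf : AEStronglyMeasurable f μ) (hf0 : 0 ≤ᵐ[μ] f) (hint : Integrable (fun x => f x ^ p) μ) :
    MemLp f (ENNReal.ofReal p) μ := by
  rw [← integrable_norm_rpow_iff hf (by simpa using hp) ENNReal.ofReal_ne_top,
    ENNReal.toReal_ofReal hp.le]
  refine hint.congr ?_
  filter_upwards [hf0] with x hx
  rw [norm_of_nonneg hx]

theorem integral_mul_le_integral_rpow_mul_integral_mul_rpow {q : ℝ} {w g : X → ℝ} (hq : 1 ≤ q)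
    (hw0 : 0 ≤ᵐ[μ] w) (hg0 : 0 ≤ᵐ[μ] g) (hw : Integrable w μ) (hg : AEStronglyMeasurable g μ)
    (hwg : Integrable (fun x => w x * g x ^ q) μ) :
    ∫ x, w x * g x ∂μ ≤ (∫ x, w x ∂μ) ^ (1 - 1 / q) * (∫ x, w x * g x ^ q ∂μ) ^ (1 / q) := by
  obtain rfl | hq := hq.eq_or_lt
  · simp
  set p := q.conjExponent
  have hpq : p.HolderConjugate q := (HolderConjugate.conjExponent hq).symm
  have hinv : 1 / p + 1 / q = 1 := by simpa only [one_div] using hpq.inv_add_inv_eq_one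
  have hprod : (fun x => w x * g x) =ᵐ[μ] fun x => w x ^ (1 / p) * (w x ^ (1 / q) * g x) := by
    filter_upwards [hw0] with x hx
    rw [← mul_assoc, ← rpow_add' hx (hinv.trans_ne one_ne_zero), hinv, rpow_one]
  have hleft : (fun x => (w x ^ (1 / p)) ^ p) =ᵐ[μ] w := by
    filter_upwards [hw0] with x hx
    rw [← rpow_mul hx, one_div_mul_cancel hpq.ne_zero, rpow_one]
  have hright : (fun x => (w x ^ (1 / q) * g x) ^ q) =ᵐ[μ] fun x => w x * g x ^ q := by
    filter_upwards [hw0, hg0] with x hwx hgx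
    rw [mul_rpow (rpow_nonneg hwx _) hgx, ← rpow_mul hwx,
      one_div_mul_cancel hpq.symm.ne_zero, rpow_one]
  have hroot (r : ℝ) : AEStronglyMeasurable (fun x => w x ^ r) μ :=
    (hw.aemeasurable.pow_const r).aestronglyMeasurable
  have hroot0 (r : ℝ) : 0 ≤ᵐ[μ] fun x => w x ^ r := hw0.mono fun x hx => rpow_nonneg hx r
  have hprod0 : 0 ≤ᵐ[μ] fun x => w x ^ (1 / q) * g x := by
    filter_upwards [hroot0 (1 / q), hg0] with x hwx hgx using mul_nonneg hwx hgx
  have holder := integral_mul_le_Lp_mul_Lq_of_nonneg hpq (hroot0 (1 / p)) hprod0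
    (memLp_ofReal_of_integrable_rpow hpq.pos (hroot _) (hroot0 _) (hw.congr hleft.symm))
    (memLp_ofReal_of_integrable_rpow hpq.symm.pos ((hroot _).mul hg) hprod0
      (hwg.congr hright.symm))
  rwa [← integral_congr_ae hprod, integral_congr_ae hleft, integral_congr_ae hright,
    eq_sub_of_add_eq hinv] at holder

end PowerMean

theorem integral_rpow_mul_le_log_sub_log_rpow_mul {a b s q : ℝ} {φ : ℝ → ℝ} (ha : 0 < a)
    (hab : a ≤ b) (hq : 1 ≤ q) (hmeas : AEStronglyMeasurable φ (volume.restrict (Ioc a b)))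
    (h0 : ∀ x ∈ Ioc a b, 0 ≤ φ x) (hint : IntervalIntegrable (fun x => φ x ^ q) volume a b) :
    ∫ x in a..b, x ^ s * φ x ≤
      (log b - log a) ^ (1 - 1 / q) * (∫ x in a..b, x ^ ((s + 1) * q - 1) * φ x ^ q) ^ (1 / q) := by
  have hb : 0 < b := ha.trans_le hab
  have hpow := continuousOn_rpow_uIcc ha hb
  have hpos : ∀ x ∈ Ioc a b, 0 < x := fun x hx => ha.trans hx.1
  have hprod : EqOn (fun x => x⁻¹ * (x ^ (s + 1) * φ x)) (fun x => x ^ s * φ x) (Ioc a b) := by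
    intro x hx
    have := hpos x hx
    simp only [rpow_add_one this.ne']
    field_simp
  have hpowq : EqOn (fun x => x⁻¹ * (x ^ (s + 1) * φ x) ^ q)
      (fun x => x ^ ((s + 1) * q - 1) * φ x ^ q) (Ioc a b) := by
    intro x hx
    have := hpos x hx
    simp only [mul_rpow (rpow_nonneg this.le _) (h0 x hx), ← rpow_mul this.le,
      rpow_sub_one this.ne']
    field_simp
  have hlog : ∫ x in Ioc a b, x⁻¹ = log b - log a := by
    rw [← intervalIntegral.integral_of_le hab, integral_inv_of_pos ha hb, log_div hb.ne' ha.ne']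
  have hmean := integral_mul_le_integral_rpow_mul_integral_mul_rpow
    (μ := volume.restrict (Ioc a b)) (w := fun x => x⁻¹) (g := fun x => x ^ (s + 1) * φ x) hq
    (ae_restrict_of_forall_mem measurableSet_Ioc fun x hx => (inv_pos.2 (hpos x hx)).le)
    (ae_restrict_of_forall_mem measurableSet_Ioc fun x hx =>
      mul_nonneg (rpow_nonneg (hpos x hx).le _) (h0 x hx))
    ((intervalIntegrable_iff_integrableOn_Ioc_of_le hab).1
      (by simpa only [rpow_neg_one] using (hpow (-1)).intervalIntegrable))
    (.mul (by fun_prop) hmeas)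
    (((intervalIntegrable_iff_integrableOn_Ioc_of_le hab).1
      (hint.continuousOn_mul (hpow _))).congr_fun hpowq.symm measurableSet_Ioc)
  rwa [setIntegral_congr_fun measurableSet_Ioc hprod, setIntegral_congr_fun measurableSet_Ioc hpowq,
    hlog, ← intervalIntegral.integral_of_le hab, ← intervalIntegral.integral_of_le hab] at hmean

theorem GAConvexOn.abs_integral_rpow_mul_le {φ : ℝ → ℝ} {a b c m q s : ℝ}
    (hconv : GAConvexOn 1 m c (fun x => |φ x| ^ q)) (ha : 0 < a) (hab : a < b) (hm : m ≠ 0)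
    (hq : 1 ≤ q) (hs : -1 < s) (hac : a ^ (1 / m) ≤ c) (hbc : b ≤ c)
    (hmeas : AEStronglyMeasurable φ (volume.restrict (Ioc a b)))
    (hint : IntervalIntegrable (fun x => |φ x| ^ q) volume a b) :
    |∫ x in a..b, x ^ s * φ x| ≤
      (log b - log a) ^ (1 - 1 / q) * ((1 / ((s + 1) * q)) ^ (1 / q) *
        (m * (L (a ^ ((s + 1) * q)) (b ^ ((s + 1) * q)) - a ^ ((s + 1) * q)) *
            |φ (a ^ (1 / m))| ^ q +
          (b ^ ((s + 1) * q) - L (a ^ ((s + 1) * q)) (b ^ ((s + 1) * q))) * |φ b| ^ q) ^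
            (1 / q)) := by
  have hσ : 0 < (s + 1) * q := mul_pos (by linarith) (by linarith)
  have hD : 0 ≤ log b - log a := sub_nonneg.2 (log_le_log ha hab.le)
  have hx0 : ∀ x ∈ Icc a b, 0 ≤ x := fun x hx => ha.le.trans hx.1
  have hupper := hconv.integral_rpow_mul_le ha hab hm hσ.ne' hac hbc hint
  have hlower : 0 ≤ ∫ x in a..b, x ^ ((s + 1) * q - 1) * |φ x| ^ q :=
    intervalIntegral.integral_nonneg hab.le fun x hx =>
      mul_nonneg (rpow_nonneg (hx0 x hx) _) (by positivity)
  have hfactor := (mul_nonneg_iff_of_pos_left (one_div_pos.2 hσ)).1 (hlower.trans hupper)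
  have habs : ∫ x in a..b, |x ^ s * φ x| = ∫ x in a..b, x ^ s * |φ x| :=
    intervalIntegral.integral_congr fun x hx => by
      rw [uIcc_of_le hab.le] at hx
      simp only [abs_mul, abs_of_nonneg (rpow_nonneg (hx0 x hx) s)]
  rw [← mul_rpow (one_div_pos.2 hσ).le hfactor]
  calc |∫ x in a..b, x ^ s * φ x|
      ≤ ∫ x in a..b, x ^ s * |φ x| :=
        (intervalIntegral.abs_integral_le_integral_abs hab.le).trans_eq habs
    _ ≤ (log b - log a) ^ (1 - 1 / q) *
          (∫ x in a..b, x ^ ((s + 1) * q - 1) * |φ x| ^ q) ^ (1 / q) :=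
        integral_rpow_mul_le_log_sub_log_rpow_mul ha hab.le hq hmeas.norm
          (fun x _ => abs_nonneg (φ x)) hint
    _ ≤ _ := by gcongr

theorem aestronglyMeasurable_of_hasDerivWithinAt_Icc {E : Type*} [NormedAddCommGroup E]
    [NormedSpace ℝ E] [CompleteSpace E] {f f' : ℝ → E} {a b : ℝ}
    (hderiv : ∀ x ∈ Icc a b, HasDerivWithinAt f (f' x) (Icc a b) x) :
    AEStronglyMeasurable f' (volume.restrict (Ioc a b)) := by
  rw [← restrict_Ioo_eq_restrict_Ioc]
  refine (stronglyMeasurable_deriv f).aestronglyMeasurable.congr ?_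
  refine ae_restrict_of_forall_mem measurableSet_Ioo fun x hx => ?_
  exact ((hderiv x (Ioo_subset_Icc_self hx)).hasDerivAt (Icc_mem_nhds hx.1 hx.2)).deriv

theorem integrable_of_integrable_norm_rpow {X E : Type*} [MeasurableSpace X]
    [NormedAddCommGroup E] {μ : Measure X} [IsFiniteMeasure μ] {q : ℝ} {φ : X → E} (hq : 1 ≤ q)
    (hφ : AEStronglyMeasurable φ μ) (hint : Integrable (fun x => ‖φ x‖ ^ q) μ) :
    Integrable φ μ := by
  have h := integrable_norm_rpow_of_le hφ zero_le_one (zero_le_one.trans hq) hq hint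
  simpa only [rpow_one, integrable_norm_iff hφ] using h

theorem stmt_9_general {f f' : ℝ → ℝ} {a b m q s : ℝ} (ha : 0 < a) (hab : a < b) (hm : 0 < m)
    (hq : 1 ≤ q) (hs : 0 < s) (hderiv : ∀ x ∈ Icc a b, HasDerivWithinAt f (f' x) (Icc a b) x)
    (hconv : GAConvexOn 1 m (max (a ^ (1 / m)) b) (fun x => |f' x| ^ q)) :
    |(b ^ s * f b - a ^ s * f a) / s - ∫ x in a..b, x ^ (s - 1) * f x| ≤
      ((log b - log a) ^ (1 - 1 / q) / s) * (1 / ((s + 1) * q)) ^ (1 / q) *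
        (m * (L (a ^ ((s + 1) * q)) (b ^ ((s + 1) * q)) - a ^ ((s + 1) * q)) *
            |f' (a ^ (1 / m))| ^ q +
          (b ^ ((s + 1) * q) - L (a ^ ((s + 1) * q)) (b ^ ((s + 1) * q))) * |f' b| ^ q) ^
            (1 / q) := by
  have hac := le_max_left (a ^ (1 / m)) b
  have hbc := le_max_right (a ^ (1 / m)) b
  have hmeas := aestronglyMeasurable_of_hasDerivWithinAt_Icc hderiv
  have hmeas_rpow : AEStronglyMeasurable (fun x => |f' x| ^ q) (volume.restrict (Ioc a b)) :=
    (hmeas.norm.aemeasurable.pow_const q).aestronglyMeasurable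
  have hint_rpow := hconv.intervalIntegrable_of_nonneg ha hab hm.ne' hac hbc hmeas_rpow
    fun x _ => rpow_nonneg (abs_nonneg (f' x)) q
  have hint : IntervalIntegrable f' volume a b :=
    (intervalIntegrable_iff_integrableOn_Ioc_of_le hab.le).2
      (integrable_of_integrable_norm_rpow hq hmeas hint_rpow.1)
  have hparts : (b ^ s * f b - a ^ s * f a) / s - ∫ x in a..b, x ^ (s - 1) * f x =
      (∫ x in a..b, x ^ s * f' x) / s := by
    rw [integral_rpow_mul_deriv_eq ha (ha.trans hab) (by rwa [uIcc_of_le hab.le]) hint]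
    field_simp
  rw [hparts, abs_div, abs_of_pos hs, div_mul_eq_mul_div, div_mul_eq_mul_div, mul_assoc]
  gcongr
  exact hconv.abs_integral_rpow_mul_le ha hab hm.ne' hq (by linarith) hac hbc hmeas hint_rpow

theorem stmt_9 (f f' : ℝ → ℝ) (a b m q : ℝ) (ha : 0 < a) (hab : a < b)
    (hm : m ∈ Ioc (0:ℝ) 1) (hq : 1 < q)
    (hderiv : ∀ x ∈ Ici (0:ℝ), HasDerivAt f (f' x) x)
    (hint : IntervalIntegrable f' volume a b)
    (hconv : GAConvexOn 1 m (max (a ^ (1/m)) b) (fun x => |f' x| ^ q)) :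
    |(b ^ 2 * f b - a ^ 2 * f a) / 2 - ∫ x in a..b, x * f x| ≤
      ((Real.log b - Real.log a) ^ (1 - 1/q) / 2) * (1 / (3 * q)) ^ (1/q) *
        (m * (L (a ^ (3 * q)) (b ^ (3 * q)) - a ^ (3 * q)) * |f' (a ^ (1/m))| ^ q +
          (b ^ (3 * q) - L (a ^ (3 * q)) (b ^ (3 * q))) * |f' b| ^ q) ^ (1/q) := by
  have h := stmt_9_general (s := 2) ha hab hm.1 hq.le two_pos
    (fun x hx => (hderiv x (ha.le.trans hx.1)).hasDerivWithinAt) hconv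
  norm_num only [rpow_two, rpow_one] at h ⊢
  exact h
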